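/- arXiv:1710.08353 — 5 statements merged into one kernel-verified Lean document; each statement's English description precedes it below -/
import Mathlib

section
/- Let k ≥ 2 be a natural number and let S be a non-sparse k-automatic subset of ℕ such that a deterministic finite automaton with m states accepts the language of base-k expansions of the elements of S. Let T be the set of all natural numbers that can be written as a sum of at most k^{11m+1} elements of S. Then for each natural number M > k^{7m+1} there exists n ∈ T with |M − n| < k^{12m+1}. In particular, T is (2k^{12m+1})-syndetic. -/
/-- `n` can be written as a sum of at least one and at most `N` elements of `S`
(repetitions allowed). -/
def SumOfAtMost (S : Set ℕ) (N n : ℕ) : Prop :=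
  ∃ l : List ℕ, l ≠ [] ∧ l.length ≤ N ∧ (∀ x ∈ l, x ∈ S) ∧ l.sum = n

/-- `π_S(x) = #{n ≤ x : n ∈ S}`. -/
noncomputable def piCount (S : Set ℕ) (x : ℕ) : ℕ :=
  Set.ncard {n | n ∈ S ∧ n ≤ x}

/-- `S` is sparse if `π_S(x) = O((log x)^d)` for some natural number `d`. -/
def IsSparse (S : Set ℕ) : Prop :=
  ∃ d : ℕ, ∃ C : ℝ, 0 < C ∧ ∃ x0 : ℕ, ∀ x : ℕ, x0 ≤ x →
    (piCount S x : ℝ) ≤ C * (Real.log x) ^ d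

/-- `S ⊆ ℕ` is `k`-automatic: some DFA over the alphabet `{0, …, k-1}` accepts exactly
the base-`k` expansions (least-significant digit first, without leading zeros)
of the elements of `S`. -/
def IsKAutomatic (k : ℕ) (S : Set ℕ) : Prop :=
  ∃ (m : ℕ) (M : DFA (Fin k) (Fin m)),
    ∀ w : List (Fin k), w ∈ M.accepts ↔ ∃ s ∈ S, w.map Fin.val = Nat.digits k s

/-!
A non-sparse automatic set has a reachable and co-reachable state with two different loops:
otherwise an accepted word would be determined by its length together with, for each state, the
time of the last visit and the letter read on leaving, and there are only polynomially many such
records. Concatenating the loops yields two loops `y ≠ z` of the same length, so `S` contains the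
values of all words `u · {y, z}ⁿ · v`. With `q = k ^ |y|`, these values are `c n + g * b`, where
`b` runs over the numbers with `n` base-`q` digits in `{0, 1}`. Every number below `q ^ n` is a sum
of `q - 1` such `b`, so sums of elements of `S` contain long arithmetic progressions with
difference `g`. Choosing `n` according to the size of the target `N` and then the number of
summands by division, one gets within `g` of `N`.
-/

namespace SumOfAtMost

variable {S : Set ℕ} {N N' n n' : ℕ}

theorem mono (h : SumOfAtMost S N n) (hN : N ≤ N') : SumOfAtMost S N' n := by
  obtain ⟨l, hne, hlen, hl, hsum⟩ := h
  exact ⟨l, hne, hlen.trans hN, hl, hsum⟩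

theorem add (h : SumOfAtMost S N n) (h' : SumOfAtMost S N' n') :
    SumOfAtMost S (N + N') (n + n') := by
  obtain ⟨l, hne, hlen, hl, rfl⟩ := h
  obtain ⟨l', -, hlen', hl', rfl⟩ := h'
  refine ⟨l ++ l', List.append_ne_nil_of_left_ne_nil hne l', ?_, ?_, List.sum_append⟩
  · rw [List.length_append]
    exact Nat.add_le_add hlen hlen'
  · exact List.forall_mem_append.2 ⟨hl, hl'⟩

theorem of_mem (hn : n ∈ S) : SumOfAtMost S 1 n :=
  ⟨[n], by simp, by simp, by simpa using hn, List.sum_singleton⟩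

theorem sum {ι : Type*} {s : Finset ι} (hs : s.Nonempty) {f : ι → ℕ} (hf : ∀ i ∈ s, f i ∈ S) :
    SumOfAtMost S s.card (∑ i ∈ s, f i) := by
  refine ⟨s.toList.map f, by simpa using hs.ne_empty, by simp, ?_, Finset.sum_map_toList s f⟩
  simpa using hf

end SumOfAtMost

/-- The natural numbers with `n` base-`q` digits (leading zeros allowed), all of them `0` or `1`;
the digits are encoded as booleans, least significant first. -/
def zeroOneNumbers (q n : ℕ) : Set ℕ :=
  {a | ∃ b : List Bool, b.length = n ∧ Nat.ofDigits q (b.map Bool.toNat) = a}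

theorem exists_sum_zeroOneNumbers_eq {q n N : ℕ} (hN : N < q ^ n) :
    ∃ f : ℕ → ℕ, (∀ i, f i ∈ zeroOneNumbers q n) ∧ ∑ i ∈ Finset.range (q - 1), f i = N := by
  induction n generalizing N with
  | zero => exact ⟨0, fun _ => ⟨[], rfl, rfl⟩, by simp_all⟩
  | succ n ih =>
    rcases q.eq_zero_or_pos with rfl | hq
    · simp at hN
    obtain ⟨f, hf, hsum⟩ := ih (Nat.div_lt_of_lt_mul (by rwa [pow_succ'] at hN))
    choose b hlen hval using hf
    -- The lowest digit of `N` is distributed as ones over the first `N % q` summands.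
    refine ⟨fun i => (if i < N % q then 1 else 0) + q * f i, fun i => ?_, ?_⟩
    · refine ⟨decide (i < N % q) :: b i, by rw [List.length_cons, hlen], ?_⟩
      rw [List.map_cons, Nat.ofDigits_cons, hval, Bool.toNat, Bool.cond_decide]
    · have hones : ∑ i ∈ Finset.range (q - 1), (if i < N % q then 1 else 0) = N % q := by
        have hmod : N % q ≤ q - 1 := Nat.le_sub_one_of_lt (Nat.mod_lt N hq)
        have hfilter : (Finset.range (q - 1)).filter (· < N % q) = Finset.range (N % q) := by
          ext i
          simp only [Finset.mem_filter, Finset.mem_range]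
          omega
        rw [Finset.sum_boole, hfilter, Finset.card_range, Nat.cast_id]
      rw [Finset.sum_add_distrib, ← Finset.mul_sum, hsum, hones, Nat.mod_add_div]

section Progressions

variable {S : Set ℕ} {q g n : ℕ}

theorem sumOfAtMost_of_lt_pow {c a : ℕ} (hq : 1 < q) (hS : ∀ b ∈ zeroOneNumbers q n, c + g * b ∈ S)
    (ha : a < q ^ n) : SumOfAtMost S (q - 1) ((q - 1) * c + g * a) := by
  obtain ⟨f, hf, rfl⟩ := exists_sum_zeroOneNumbers_eq ha
  have hne : (Finset.range (q - 1)).Nonempty := Finset.nonempty_range_iff.2 (by omega)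
  simpa [Finset.sum_add_distrib, Finset.mul_sum] using
    SumOfAtMost.sum hne fun i _ => hS (f i) (hf i)

theorem sumOfAtMost_of_le_mul {c a t : ℕ} (hq : 1 < q)
    (hS : ∀ b ∈ zeroOneNumbers q n, c + g * b ∈ S) (ht : 1 ≤ t) (ha : a ≤ t * (q ^ n - 1)) :
    SumOfAtMost S (t * (q - 1)) (t * ((q - 1) * c) + g * a) := by
  have hpos : 0 < q ^ n := by positivity
  induction t, ht using Nat.le_induction generalizing a with
  | base => simpa using sumOfAtMost_of_lt_pow hq hS (by omega : a < q ^ n)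
  | succ t _ ih =>
    rw [Nat.succ_mul] at ha
    obtain ⟨a₁, a₂, rfl, ha₁, ha₂⟩ : ∃ a₁ a₂, a = a₁ + a₂ ∧ a₁ ≤ t * (q ^ n - 1) ∧ a₂ < q ^ n :=
      ⟨min a (t * (q ^ n - 1)), a - t * (q ^ n - 1), by omega, by omega, by omega⟩
    convert (ih ha₁).add (sumOfAtMost_of_lt_pow hq hS ha₂) using 1 <;> ring

/-- By `hcover`, the progression formed by the sums of `t * (q - 1)` elements, where `T ≤ t`,
reaches from `t * ((q - 1) * c)` at least to `(t + 1) * ((q - 1) * c)`. -/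
theorem exists_sumOfAtMost_near_of_cover {c T N : ℕ} (hq : 1 < q) (hc : 0 < c)
    (hS : ∀ b ∈ zeroOneNumbers q n, c + g * b ∈ S) (hN : T * ((q - 1) * c) ≤ N)
    (hcover : (q - 1) * c ≤ T * (g * (q ^ n - 1))) :
    ∃ s, SumOfAtMost S (N / c) s ∧ s ≤ N ∧ N < s + g := by
  set A := (q - 1) * c with hA
  have hApos : 0 < A := Nat.mul_pos (by omega) hc
  obtain ⟨hTpos, hgpos, -⟩ : 0 < T ∧ 0 < g ∧ 0 < q ^ n - 1 := by
    simpa only [CanonicallyOrderedAdd.mul_pos] using hApos.trans_le hcover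
  set t := N / A with ht
  have hTt : T ≤ t := (Nat.le_div_iff_mul_le hApos).2 hN
  have hreach : N % A / g ≤ t * (q ^ n - 1) := by
    refine Nat.div_le_of_le_mul ?_
    calc N % A ≤ A := (Nat.mod_lt N hApos).le
      _ ≤ T * (g * (q ^ n - 1)) := hcover
      _ ≤ t * (g * (q ^ n - 1)) := by gcongr
      _ = g * (t * (q ^ n - 1)) := by ring
  have hcount : t * (q - 1) ≤ N / c := by
    rw [ht, hA, mul_comm (q - 1), ← Nat.div_div_eq_div_mul]
    exact Nat.div_mul_le_self _ _
  refine ⟨t * A + g * (N % A / g),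
    (sumOfAtMost_of_le_mul hq hS (hTpos.trans_le hTt) hreach).mono hcount, ?_⟩
  have hN_eq : t * A + N % A = N := Nat.div_add_mod' N A
  have hrem_eq : g * (N % A / g) + N % A % g = N % A := Nat.div_add_mod (N % A) g
  have hrem_lt : N % A % g < g := Nat.mod_lt _ hgpos
  omega

theorem exists_pos_pow_mul_le_lt {C N : ℕ} (hq : 1 < q) (hC : 0 < C) (hN : q * C ≤ N) :
    ∃ n, 0 < n ∧ q ^ n * C ≤ N ∧ N < q ^ (n + 1) * C := by
  have hqNC : q ≤ N / C := (Nat.le_div_iff_mul_le hC).2 hN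
  refine ⟨Nat.log q (N / C), Nat.log_pos hq hqNC, ?_, ?_⟩
  · exact (Nat.le_div_iff_mul_le hC).1 (Nat.pow_log_le_self q (by omega))
  · exact (Nat.div_lt_iff_lt_mul hC).1 (Nat.lt_pow_succ_log_self hq _)

theorem exists_sumOfAtMost_near_of_scales {c : ℕ → ℕ} {U K N : ℕ} (hq : 1 < q) (hU : 0 < U)
    (hg : U ≤ g) (hc_lower : ∀ n, U * q ^ n ≤ c n) (hc_upper : ∀ n, c n ≤ U * q ^ n * K)
    (hS : ∀ n, ∀ b ∈ zeroOneNumbers q n, c n + g * b ∈ S) (hN : U * q ^ 3 * K ^ 2 ≤ N) :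
    ∃ s, SumOfAtMost S (q ^ 3 * K ^ 2) s ∧ s ≤ N ∧ N < s + g := by
  have hK : 0 < K := by
    refine Nat.pos_of_mul_pos_left (a := U * q ^ 0) ?_
    exact Nat.lt_of_lt_of_le (by positivity) ((hc_lower 0).trans (hc_upper 0))
  set C := U * q ^ 2 * K ^ 2 with hC
  have hCpos : 0 < C := by positivity
  have hqC : q * C = U * q ^ 3 * K ^ 2 := by rw [hC]; ring
  obtain ⟨n, hn_pos, hn_le, hn_lt⟩ := exists_pos_pow_mul_le_lt hq hCpos (hqC ▸ hN)
  have hN_lower : q * K * ((q - 1) * c n) ≤ N := by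
    calc q * K * ((q - 1) * c n) ≤ q * K * (q * (U * q ^ n * K)) := by
          gcongr
          · exact Nat.sub_le q 1
          · exact hc_upper n
      _ = q ^ n * C := by rw [hC]; ring
      _ ≤ N := hn_le
  have hgeom : (q - 1) * q ^ n ≤ q * (q ^ n - 1) := by
    have : q ≤ q ^ n := Nat.le_self_pow hn_pos.ne' q
    rw [Nat.sub_one_mul, Nat.mul_sub_one]
    omega
  have hcover : (q - 1) * c n ≤ q * K * (g * (q ^ n - 1)) := by
    calc (q - 1) * c n ≤ (q - 1) * (U * q ^ n * K) := by gcongr; exact hc_upper n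
      _ = (q - 1) * q ^ n * (U * K) := by ring
      _ ≤ q * (q ^ n - 1) * (g * K) := by gcongr
      _ = q * K * (g * (q ^ n - 1)) := by ring
  have hc_pos : 0 < c n := (Nat.mul_pos hU (by positivity)).trans_le (hc_lower n)
  obtain ⟨s, hs, hs_near⟩ := exists_sumOfAtMost_near_of_cover hq hc_pos (hS n) hN_lower hcover
  refine ⟨s, hs.mono (Nat.div_le_of_le_mul ?_), hs_near⟩
  calc N ≤ q ^ (n + 1) * C := hn_lt.le
    _ = U * q ^ n * (q ^ 3 * K ^ 2) := by rw [hC]; ring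
    _ ≤ c n * (q ^ 3 * K ^ 2) := by gcongr; exact hc_lower n

end Progressions

theorem exists_eq_append_cons_of_ne {α : Type*} {l l' : List α} (hlen : l.length = l'.length)
    (hne : l ≠ l') : ∃ x a a' t t', a ≠ a' ∧ l = x ++ a :: t ∧ l' = x ++ a' :: t' := by
  induction l generalizing l' with
  | nil => exact absurd (List.length_eq_zero_iff.1 hlen.symm).symm hne
  | cons b l ih =>
    obtain _ | ⟨b', l'⟩ := l'
    · simp at hlen
    by_cases hb : b = b'
    · subst hb
      obtain ⟨x, a, a', t, t', ha, rfl, rfl⟩ :=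
        ih (Nat.succ.inj hlen) (fun h => hne (congrArg (b :: ·) h))
      exact ⟨b :: x, a, a', t, t', ha, rfl, rfl⟩
    · exact ⟨[], b, b', l, l', hb, rfl, rfl⟩

section Automata

variable {α σ : Type*} {M : DFA α σ}

theorem append_mem_accepts {x y : List α} :
    x ++ y ∈ M.accepts ↔ M.evalFrom (M.eval x) y ∈ M.accept := by
  rw [DFA.mem_accepts, DFA.eval, DFA.evalFrom_of_append]

theorem exists_length_lt_card_evalFrom_eq [Fintype σ] (M : DFA α σ) (s : σ) (w : List α) :
    ∃ w', w'.length < Fintype.card σ ∧ M.evalFrom s w' = M.evalFrom s w := by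
  induction hw : w.length using Nat.strong_induction_on generalizing w with
  | _ _ ih =>
    subst hw
    by_cases hlen : w.length < Fintype.card σ
    · exact ⟨w, hlen, rfl⟩
    obtain ⟨_, a, b, c, rfl, -, hb, ha, -, hc⟩ := M.evalFrom_split (not_lt.1 hlen) rfl
    have hb_pos : 0 < b.length := List.length_pos_iff.2 hb
    obtain ⟨w', hw', heval⟩ := ih (a ++ c).length (by simp [hb_pos]) (a ++ c) rfl
    exact ⟨w', hw', by rw [heval, DFA.evalFrom_of_append, ha, hc]⟩

/-- A state with two loops that differ in their first letter. A regular language is sparse unless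
some reachable and co-reachable state is branching. -/
def IsBranchingState (M : DFA α σ) (p : σ) : Prop :=
  ∃ c d w w', c ≠ d ∧ M.evalFrom p (c :: w) = p ∧ M.evalFrom p (d :: w') = p

open Classical in
/-- The last time at which the run of `M` on `w` is in state `s`; junk value `0` if there is no
such time. -/
noncomputable def lastVisit (M : DFA α σ) (w : List α) (s : σ) : ℕ :=
  Nat.findGreatest (fun j => M.eval (w.take j) = s) w.length

theorem lastVisit_le_length (w : List α) (s : σ) : lastVisit M w s ≤ w.length := by
  classical exact Nat.findGreatest_le _

theorem length_le_lastVisit (x t : List α) :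
    x.length ≤ lastVisit M (x ++ t) (M.eval x) := by
  classical exact Nat.le_findGreatest (by simp) (by simp)

theorem eval_take_lastVisit (x t : List α) :
    M.eval ((x ++ t).take (lastVisit M (x ++ t) (M.eval x))) = M.eval x := by
  classical
  exact Nat.findGreatest_spec (P := fun j => M.eval ((x ++ t).take j) = M.eval x)
    (m := x.length) (by simp) (by simp)

theorem exists_loop_of_length_lt_lastVisit {x t : List α} {c : α}
    (h : x.length < lastVisit M (x ++ c :: t) (M.eval x)) :
    ∃ r, M.evalFrom (M.eval x) (c :: r) = M.eval x := by
  obtain ⟨e, he⟩ := Nat.exists_eq_add_of_lt h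
  refine ⟨t.take e, ?_⟩
  have hreturn := eval_take_lastVisit (M := M) x (c :: t)
  rwa [he, add_assoc, List.take_length_add_append, List.take_succ_cons, DFA.eval,
    DFA.evalFrom_of_append] at hreturn

/-- The length of `w` and, for each state, the time of the last visit together with the letter
read next (`none` at the end of `w`). -/
noncomputable def lastVisitRecord (M : DFA α σ) (w : List α) : ℕ × (σ → ℕ × Option α) :=
  (w.length, fun s => (lastVisit M w s, w[lastVisit M w s]?))

theorem injOn_lastVisitRecord
    (hM : ∀ x t, x ++ t ∈ M.accepts → ¬ IsBranchingState M (M.eval x)) :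
    Set.InjOn (lastVisitRecord M) M.accepts := by
  intro w hw w' _ hrec
  by_contra hne
  obtain ⟨hlen, hvisits⟩ := Prod.ext_iff.1 hrec
  obtain ⟨x, c, d, t, t', hcd, rfl, rfl⟩ := exists_eq_append_cons_of_ne hlen hne
  obtain ⟨htime, hletter⟩ := Prod.ext_iff.1 (congrFun hvisits (M.eval x))
  dsimp only [lastVisitRecord] at htime hletter
  rcases (length_le_lastVisit (M := M) x (c :: t)).eq_or_lt with hlast | hlater
  · rw [← htime, ← hlast] at hletter
    exact hcd (by simpa using hletter)
  · obtain ⟨r, hr⟩ := exists_loop_of_length_lt_lastVisit hlater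
    obtain ⟨r', hr'⟩ := exists_loop_of_length_lt_lastVisit (htime ▸ hlater)
    exact hM x (c :: t) hw ⟨c, d, r, r', hcd, hr, hr'⟩

theorem ncard_accepts_length_le [Fintype α] [Fintype σ]
    (hM : ∀ x t, x ++ t ∈ M.accepts → ¬ IsBranchingState M (M.eval x)) (L : ℕ) :
    {w | w ∈ M.accepts ∧ w.length ≤ L}.ncard ≤
      (Fintype.card α + 1) ^ Fintype.card σ * (L + 1) ^ (Fintype.card σ + 1) := by
  classical
  let records : Finset (ℕ × (σ → ℕ × Option α)) :=
    Finset.range (L + 1) ×ˢ Fintype.piFinset fun _ => Finset.range (L + 1) ×ˢ Finset.univ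
  have hmaps : ∀ w ∈ {w | w ∈ M.accepts ∧ w.length ≤ L}, lastVisitRecord M w ∈ records := by
    rintro w ⟨-, hw⟩
    have hvisit (s : σ) : lastVisit M w s < L + 1 :=
      Nat.lt_succ_of_le ((lastVisit_le_length w s).trans hw)
    simpa [records, lastVisitRecord, hvisit] using Nat.lt_succ_of_le hw
  calc {w | w ∈ M.accepts ∧ w.length ≤ L}.ncard
      ≤ (records : Set (ℕ × (σ → ℕ × Option α))).ncard :=
        Set.ncard_le_ncard_of_injOn _ hmaps ((injOn_lastVisitRecord hM).mono fun _ h => h.1)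
    _ = (L + 1) * ((L + 1) * (Fintype.card α + 1)) ^ Fintype.card σ := by
        rw [Set.ncard_coe_finset]
        simp [records]
    _ = _ := by rw [mul_pow, pow_succ]; ring

/-- Two loops `y` and `z` of the same length at the state reached by `u`, from which `v` leads to
acceptance. -/
structure LoopPair (M : DFA α σ) (u y z v : List α) : Prop where
  length_eq : y.length = z.length
  loop_left : M.evalFrom (M.eval u) y = M.eval u
  loop_right : M.evalFrom (M.eval u) z = M.eval u
  exit : M.evalFrom (M.eval u) v ∈ M.accept

theorem LoopPair.symm {u y z v : List α} (h : LoopPair M u y z v) : LoopPair M u z y v :=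
  ⟨h.length_eq.symm, h.loop_right, h.loop_left, h.exit⟩

theorem LoopPair.evalFrom_flatMap {u y z v : List α} (h : LoopPair M u y z v) (b : List Bool) :
    M.evalFrom (M.eval u) (b.flatMap (cond · z y)) = M.eval u := by
  induction b with
  | nil => rfl
  | cons β b ih =>
    rw [List.flatMap_cons, DFA.evalFrom_of_append]
    cases β
    · rw [cond_false, h.loop_left, ih]
    · rw [cond_true, h.loop_right, ih]

theorem LoopPair.append_flatMap_append_mem_accepts {u y z v : List α} (h : LoopPair M u y z v)
    (b : List Bool) : u ++ (b.flatMap (cond · z y) ++ v) ∈ M.accepts := by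
  rw [append_mem_accepts, DFA.evalFrom_of_append, h.evalFrom_flatMap]
  exact h.exit

theorem IsBranchingState.exists_short_loopPair [Fintype σ] {x t : List α}
    (h : IsBranchingState M (M.eval x)) (hxt : x ++ t ∈ M.accepts) :
    ∃ u y z v, LoopPair M u y z v ∧ y ≠ z ∧ v ≠ [] ∧ u.length ≤ Fintype.card σ ∧
      y.length ≤ 2 * Fintype.card σ ∧ v.length ≤ 2 * Fintype.card σ := by
  obtain ⟨c, d, w, w', hcd, hw, hw'⟩ := h
  rw [append_mem_accepts] at hxt
  obtain ⟨u, hu, hu_eval⟩ := exists_length_lt_card_evalFrom_eq M M.start x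
  change M.eval u = M.eval x at hu_eval
  rw [← hu_eval] at hw hw' hxt
  obtain ⟨r, hr, hr_eval⟩ := exists_length_lt_card_evalFrom_eq M (M.step (M.eval u) c) w
  obtain ⟨r', hr', hr'_eval⟩ := exists_length_lt_card_evalFrom_eq M (M.step (M.eval u) d) w'
  obtain ⟨v, hv, hv_eval⟩ := exists_length_lt_card_evalFrom_eq M (M.eval u) t
  rw [DFA.evalFrom_cons, ← hr_eval, ← DFA.evalFrom_cons] at hw
  rw [DFA.evalFrom_cons, ← hr'_eval, ← DFA.evalFrom_cons] at hw'
  rw [← hv_eval] at hxt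
  refine ⟨u, c :: r ++ d :: r', d :: r' ++ c :: r, c :: r ++ v,
    ⟨by simp; omega, ?_, ?_, ?_⟩, by simp [hcd], by simp, hu.le, by simp; omega, by simp; omega⟩
  · rw [DFA.evalFrom_of_append, hw, hw']
  · rw [DFA.evalFrom_of_append, hw', hw]
  · rwa [DFA.evalFrom_of_append, hw]

end Automata

theorem isSparse_of_piCount_le_mul_log_pow {S : Set ℕ} {b d : ℕ} {C : ℝ} (hb : 1 < b)
    (hC : 0 < C) (hS : ∀ x, (piCount S x : ℝ) ≤ C * (Nat.log b x + 2) ^ d) : IsSparse S := by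
  refine ⟨d, C * 4 ^ d, by positivity, 3, fun x hx => (hS x).trans ?_⟩
  have hx3 : (3 : ℝ) ≤ x := by exact_mod_cast hx
  have hlogx : 1 ≤ Real.log x := by
    rw [Real.le_log_iff_exp_le (by linarith)]
    linarith [Real.exp_one_lt_d9]
  have hlogb : 1 / 2 ≤ Real.log b := by
    have : Real.log 2 ≤ Real.log b := Real.log_le_log (by norm_num) (by exact_mod_cast hb)
    linarith [Real.log_two_gt_d9]
  have hlog : (Nat.log b x : ℝ) ≤ 2 * Real.log x := by
    calc (Nat.log b x : ℝ) ≤ Real.log x / Real.log b := Real.natLog_le_logb x b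
      _ ≤ Real.log x / (1 / 2) := by gcongr
      _ = 2 * Real.log x := by ring
  calc C * (Nat.log b x + 2 : ℝ) ^ d ≤ C * (4 * Real.log x) ^ d := by gcongr; linarith
    _ = C * 4 ^ d * Real.log x ^ d := by rw [mul_pow, mul_assoc]

/-- The number with base-`k` digits `w`, least significant digit first; trailing zero letters,
i.e. leading zero digits, are allowed. -/
def wordValue {k : ℕ} (w : List (Fin k)) : ℕ :=
  Nat.ofDigits k (w.map Fin.val)

/-- `M` accepts exactly the base-`k` expansions (least significant digit first, no leading zeros)
of the elements of `S`. -/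
def RecognizesExpansions {k : ℕ} {σ : Type*} (M : DFA (Fin k) σ) (S : Set ℕ) : Prop :=
  ∀ w : List (Fin k), w ∈ M.accepts ↔ ∃ s ∈ S, w.map Fin.val = Nat.digits k s

section Expansions

variable {k : ℕ}

theorem exists_map_val_eq_digits (hk : 1 < k) (s : ℕ) :
    ∃ w : List (Fin k), w.map Fin.val = Nat.digits k s :=
  CanLift.prf (Nat.digits k s) fun _ => Nat.digits_lt_base hk

theorem wordValue_append (x y : List (Fin k)) :
    wordValue (x ++ y) = wordValue x + k ^ x.length * wordValue y := by
  simp [wordValue, Nat.ofDigits_append]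

theorem wordValue_lt_pow_length (hk : 1 < k) (w : List (Fin k)) :
    wordValue w < k ^ w.length := by
  simpa [wordValue] using Nat.ofDigits_lt_base_pow_length (l := w.map Fin.val) hk (by simp)

theorem wordValue_ne_of_length_eq (hk : 1 < k) {y z : List (Fin k)} (hlen : y.length = z.length)
    (hne : y ≠ z) : wordValue y ≠ wordValue z := by
  intro heq
  refine hne (List.map_injective_iff.2 Fin.val_injective ?_)
  exact Nat.ofDigits_inj_of_len_eq hk (by simpa using hlen) (by simp) (by simp) heq

theorem length_flatMap_cond {α : Type*} {y z : List α} (hlen : y.length = z.length)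
    (b : List Bool) : (b.flatMap (cond · z y)).length = y.length * b.length := by
  induction b with
  | nil => rfl
  | cons β b ih =>
    rw [List.flatMap_cons, List.length_append, ih, List.length_cons, mul_add_one, add_comm]
    cases β
    · rfl
    · rw [cond_true, hlen]

theorem wordValue_flatMap_cond {y z : List (Fin k)} (hlen : y.length = z.length)
    (hle : wordValue y ≤ wordValue z) (b : List Bool) :
    wordValue (b.flatMap (cond · z y)) =
      Nat.ofDigits (k ^ y.length) (List.replicate b.length (wordValue y)) +
        (wordValue z - wordValue y) * Nat.ofDigits (k ^ y.length) (b.map Bool.toNat) := by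
  obtain ⟨e, he⟩ := Nat.exists_eq_add_of_le hle
  induction b with
  | nil => rfl
  | cons β b ih =>
    rw [List.flatMap_cons, wordValue_append, ih, List.length_cons, List.replicate_succ,
      List.map_cons, Nat.ofDigits_cons, Nat.ofDigits_cons, he, Nat.add_sub_cancel_left]
    cases β
    · simp only [cond_false, Bool.toNat_false]
      ring
    · simp only [cond_true, Bool.toNat_true, he, ← hlen]
      ring

end Expansions

section Recognizers

variable {k : ℕ} {σ : Type*} {M : DFA (Fin k) σ} {S : Set ℕ}

theorem RecognizesExpansions.digits_wordValue (hM : RecognizesExpansions M S) {w : List (Fin k)}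
    (hw : w ∈ M.accepts) : wordValue w ∈ S ∧ Nat.digits k (wordValue w) = w.map Fin.val := by
  obtain ⟨s, hs, hdigits⟩ := (hM w).1 hw
  have hvalue : wordValue w = s := by rw [wordValue, hdigits, Nat.ofDigits_digits]
  exact hvalue ▸ ⟨hs, hdigits.symm⟩

/-- The last letter of an accepted word is its leading digit, hence nonzero. -/
theorem RecognizesExpansions.wordValue_pos (hM : RecognizesExpansions M S) (hk : 1 < k)
    {u v : List (Fin k)} (huv : u ++ v ∈ M.accepts) (hv : v ≠ []) : 0 < wordValue v := by
  by_contra! hzero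
  have hvalue : wordValue (u ++ v) = wordValue u := by
    rw [wordValue_append, Nat.le_zero.1 hzero, mul_zero, add_zero]
  have hlen : (Nat.digits k (wordValue (u ++ v))).length ≤ u.length := by
    rw [hvalue, Nat.digits_length_le_iff hk]
    exact wordValue_lt_pow_length hk u
  rw [(hM.digits_wordValue huv).2, List.length_map, List.length_append] at hlen
  have := List.length_pos_iff.2 hv
  omega

theorem RecognizesExpansions.piCount_le (hM : RecognizesExpansions M S) (hk : 1 < k) (x : ℕ) :
    piCount S x ≤ {w | w ∈ M.accepts ∧ w.length ≤ Nat.log k x + 1}.ncard := by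
  have hfinite : {w | w ∈ M.accepts ∧ w.length ≤ Nat.log k x + 1}.Finite :=
    (List.finite_length_le (Fin k) (Nat.log k x + 1)).subset fun _ h => h.2
  refine le_trans (Set.ncard_le_ncard ?_ (hfinite.image wordValue)) (Set.ncard_image_le hfinite)
  rintro s ⟨hs, hsx⟩
  obtain ⟨w, hw⟩ := exists_map_val_eq_digits hk s
  refine ⟨w, ⟨(hM w).2 ⟨s, hs, hw⟩, ?_⟩, by rw [wordValue, hw, Nat.ofDigits_digits]⟩
  rw [← List.length_map Fin.val, hw, Nat.digits_length_le_iff hk]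
  exact hsx.trans_lt (Nat.lt_pow_succ_log_self hk x)

theorem RecognizesExpansions.exists_isBranchingState [Finite σ] (hM : RecognizesExpansions M S)
    (hk : 1 < k) (hS : ¬ IsSparse S) :
    ∃ x t, x ++ t ∈ M.accepts ∧ IsBranchingState M (M.eval x) := by
  have := Fintype.ofFinite σ
  by_contra! hbranch
  refine hS (isSparse_of_piCount_le_mul_log_pow (C := (k + 1) ^ Fintype.card σ)
    (d := Fintype.card σ + 1) hk (by positivity) fun x => ?_)
  have hcount := (hM.piCount_le hk x).trans (ncard_accepts_length_le hbranch _)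
  rw [Fintype.card_fin] at hcount
  exact_mod_cast hcount

theorem RecognizesExpansions.exists_short_loopPair [Fintype σ] (hM : RecognizesExpansions M S)
    (hk : 1 < k) (hS : ¬ IsSparse S) :
    ∃ u y z v, LoopPair M u y z v ∧ wordValue y < wordValue z ∧ v ≠ [] ∧
      u.length ≤ Fintype.card σ ∧ y.length ≤ 2 * Fintype.card σ ∧
      v.length ≤ 2 * Fintype.card σ := by
  obtain ⟨x, t, hxt, hbranch⟩ := hM.exists_isBranchingState hk hS
  obtain ⟨u, y, z, v, h, hne, hv, hu_len, hy_len, hv_len⟩ := hbranch.exists_short_loopPair hxt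
  rcases (wordValue_ne_of_length_eq hk h.length_eq hne).lt_or_gt with hlt | hgt
  · exact ⟨u, y, z, v, h, hlt, hv, hu_len, hy_len, hv_len⟩
  · exact ⟨u, z, y, v, h.symm, hgt, hv, hu_len, h.length_eq ▸ hy_len, hv_len⟩

theorem LoopPair.base_add_mul_mem {u y z v : List (Fin k)} (h : LoopPair M u y z v)
    (hM : RecognizesExpansions M S) (hyz : wordValue y ≤ wordValue z) {n a : ℕ}
    (ha : a ∈ zeroOneNumbers (k ^ y.length) n) :
    wordValue u + k ^ u.length *
        (Nat.ofDigits (k ^ y.length) (List.replicate n (wordValue y)) +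
          (k ^ y.length) ^ n * wordValue v) +
      k ^ u.length * (wordValue z - wordValue y) * a ∈ S := by
  obtain ⟨b, rfl, rfl⟩ := ha
  convert (hM.digits_wordValue (h.append_flatMap_append_mem_accepts b)).1 using 1
  rw [wordValue_append, wordValue_append, wordValue_flatMap_cond h.length_eq hyz,
    length_flatMap_cond h.length_eq, pow_mul]
  ring

theorem LoopPair.exists_sumOfAtMost_near {u y z v : List (Fin k)} (h : LoopPair M u y z v)
    (hM : RecognizesExpansions M S) (hk : 1 < k) (hyz : wordValue y < wordValue z) (hv : v ≠ [])
    {N : ℕ} (hN : k ^ u.length * (k ^ y.length) ^ 3 * (k ^ v.length) ^ 2 ≤ N) :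
    ∃ n, SumOfAtMost S ((k ^ y.length) ^ 3 * (k ^ v.length) ^ 2) n ∧
      n ≤ N ∧ N < n + k ^ u.length * k ^ y.length := by
  have hu_lt := wordValue_lt_pow_length hk u
  have hv_lt := wordValue_lt_pow_length hk v
  have hz_lt := wordValue_lt_pow_length hk z
  have hv_pos : 0 < wordValue v :=
    hM.wordValue_pos hk (h.append_flatMap_append_mem_accepts []) hv
  have hmem (n : ℕ) := fun a => h.base_add_mul_mem hM hyz.le (n := n) (a := a)
  rw [← h.length_eq] at hz_lt
  set U := k ^ u.length
  set q := k ^ y.length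
  set K := k ^ v.length
  have hq : 1 < q := by omega
  set Y := fun n => Nat.ofDigits q (List.replicate n (wordValue y))
  have hY_lt (n : ℕ) : Y n < q ^ n := by
    simpa [Y] using Nat.ofDigits_lt_base_pow_length (l := List.replicate n (wordValue y)) hq
      fun a ha => (List.eq_of_mem_replicate ha).trans_lt (hyz.trans hz_lt)
  have hlower (n : ℕ) : U * q ^ n ≤ wordValue u + U * (Y n + q ^ n * wordValue v) := by
    calc U * q ^ n ≤ U * (q ^ n * wordValue v) := by gcongr; exact Nat.le_mul_of_pos_right _ hv_pos
      _ ≤ wordValue u + U * (Y n + q ^ n * wordValue v) := by rw [mul_add]; omega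
  have hupper (n : ℕ) : wordValue u + U * (Y n + q ^ n * wordValue v) ≤ U * q ^ n * K := by
    calc wordValue u + U * (Y n + q ^ n * wordValue v)
        ≤ U + U * (Y n + q ^ n * wordValue v) := by gcongr
      _ = U * (Y n + 1 + q ^ n * wordValue v) := by ring
      _ ≤ U * (q ^ n + q ^ n * wordValue v) := by gcongr; exact hY_lt n
      _ = U * q ^ n * (wordValue v + 1) := by ring
      _ ≤ U * q ^ n * K := by gcongr; exact hv_lt
  obtain ⟨s, hs, hsN, hNs⟩ := exists_sumOfAtMost_near_of_scales hq (by omega)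
    (Nat.le_mul_of_pos_right U (Nat.sub_pos_of_lt hyz)) hlower hupper hmem hN
  refine ⟨s, hs, hsN, hNs.trans_le ?_⟩
  gcongr
  omega

end Recognizers

section Approximation

variable {k : ℕ} {σ : Type*} [Fintype σ] {M : DFA (Fin k) σ} {S : Set ℕ}

theorem RecognizesExpansions.exists_sumOfAtMost_abs_sub_lt (hM : RecognizesExpansions M S)
    (hk : 1 < k) (hS : ¬ IsSparse S) (N : ℕ) :
    ∃ n, SumOfAtMost S (k ^ (10 * Fintype.card σ)) n ∧
      |(N : ℤ) - n| < (k : ℤ) ^ (11 * Fintype.card σ) := by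
  obtain ⟨u, y, z, v, h, hyz, hv, hu_len, hy_len, hv_len⟩ := hM.exists_short_loopPair hk hS
  have hpow {i j : ℕ} (hij : i ≤ j) : k ^ i ≤ k ^ j := Nat.pow_le_pow_right (by omega) hij
  suffices ∃ n, SumOfAtMost S (k ^ (10 * Fintype.card σ)) n ∧
      N < n + k ^ (11 * Fintype.card σ) ∧ n < N + k ^ (11 * Fintype.card σ) by
    obtain ⟨n, hn, hNn, hnN⟩ := this
    refine ⟨n, hn, ?_⟩
    zify at hNn hnN
    rw [abs_lt]
    constructor <;> linarith
  by_cases hN : k ^ u.length * (k ^ y.length) ^ 3 * (k ^ v.length) ^ 2 ≤ N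
  · obtain ⟨n, hn, hnN, hNn⟩ := h.exists_sumOfAtMost_near hM hk hyz hv hN
    rw [← pow_mul, ← pow_mul, ← pow_add] at hn
    rw [← pow_add] at hNn
    refine ⟨n, hn.mono (hpow (by omega)), hNn.trans_le ?_, ?_⟩
    · gcongr 1
      exact hpow (by omega)
    · have : 0 < k ^ (11 * Fintype.card σ) := by positivity
      omega
  · -- A small `N` is close to the single element of `S` with expansion `u ++ v`.
    rw [← pow_mul, ← pow_mul, ← pow_add, ← pow_add] at hN
    have hN_lt : N < k ^ (11 * Fintype.card σ) := (not_le.1 hN).trans_le (hpow (by omega))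
    have huv_lt : wordValue (u ++ v) < k ^ (11 * Fintype.card σ) :=
      (wordValue_lt_pow_length hk _).trans_le (hpow (by rw [List.length_append]; omega))
    have huv : wordValue (u ++ v) ∈ S :=
      (hM.digits_wordValue (h.append_flatMap_append_mem_accepts [])).1
    exact ⟨_, (SumOfAtMost.of_mem huv).mono (Nat.one_le_pow _ _ (by omega)), by omega, by omega⟩

end Approximation

theorem exists_add_of_forall_exists_abs_sub_lt {p : ℕ → Prop} {d : ℕ}
    (hp : ∀ N : ℕ, ∃ n, p n ∧ |(N : ℤ) - n| < d) (n : ℕ) :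
    ∃ i, 1 ≤ i ∧ i ≤ 2 * d ∧ p (n + i) := by
  obtain ⟨n', hn', hdist⟩ := hp (n + d)
  rw [abs_lt, Nat.cast_add] at hdist
  obtain ⟨i, rfl⟩ := Nat.exists_eq_add_of_lt (show n < n' by omega)
  exact ⟨i + 1, by omega, by omega, hn'⟩

theorem sums_syndetic_general {k : ℕ} {σ : Type*} [Fintype σ] {M : DFA (Fin k) σ} {S : Set ℕ}
    (hk : 2 ≤ k) (hS : ¬ IsSparse S) (hM : RecognizesExpansions M S) :
    (∀ N : ℕ, ∃ n : ℕ, SumOfAtMost S (k ^ (11 * Fintype.card σ + 1)) n ∧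
      |(N : ℤ) - n| < (k : ℤ) ^ (12 * Fintype.card σ + 1)) ∧
    ∀ n : ℕ, ∃ i : ℕ, 1 ≤ i ∧ i ≤ 2 * k ^ (12 * Fintype.card σ + 1) ∧
      SumOfAtMost S (k ^ (11 * Fintype.card σ + 1)) (n + i) := by
  have hnear (N : ℕ) : ∃ n, SumOfAtMost S (k ^ (11 * Fintype.card σ + 1)) n ∧
      |(N : ℤ) - n| < ((k ^ (12 * Fintype.card σ + 1) : ℕ) : ℤ) := by
    obtain ⟨n, hn, hdist⟩ := hM.exists_sumOfAtMost_abs_sub_lt hk hS N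
    refine ⟨n, hn.mono (Nat.pow_le_pow_right (by omega) (by omega)), hdist.trans_le ?_⟩
    exact_mod_cast Nat.pow_le_pow_right (by omega) (by omega)
  exact ⟨by exact_mod_cast hnear, exists_add_of_forall_exists_abs_sub_lt hnear⟩

/-- If `S` is a non-sparse `k`-automatic set accepted (via base-`k` expansions) by a DFA
with `m` states, and `T` is the set of sums of at most `k^(11m+1)` elements of `S`, then
every `M > k^(7m+1)` is within distance `k^(12m+1)` of an element of `T`; in particular,
`T` is `2k^(12m+1)`-syndetic. -/
theorem sums_syndetic
    (k m : ℕ) (hk : 2 ≤ k) (S : Set ℕ) (hns : ¬ IsSparse S)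
    (M : DFA (Fin k) (Fin m))
    (hM : ∀ w : List (Fin k), w ∈ M.accepts ↔ ∃ s ∈ S, w.map Fin.val = Nat.digits k s) :
    (∀ Mn : ℕ, k ^ (7 * m + 1) < Mn →
      ∃ n : ℕ, SumOfAtMost S (k ^ (11 * m + 1)) n ∧
        |(Mn : ℤ) - (n : ℤ)| < (k : ℤ) ^ (12 * m + 1))
    ∧ (∀ n : ℕ, SumOfAtMost S (k ^ (11 * m + 1)) n →
        ∃ i : ℕ, 1 ≤ i ∧ i ≤ 2 * k ^ (12 * m + 1) ∧
          SumOfAtMost S (k ^ (11 * m + 1)) (n + i)) := by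
  have ⟨hnear, hsynd⟩ := Fintype.card_fin m ▸ sums_syndetic_general hk hns hM
  exact ⟨fun N _ => hnear N, fun n _ => hsynd n⟩
end

section
/- Let 𝒞 be the set of natural numbers (including 0) whose base-3 expansions consist only of the digits 0 and 2. Then every even natural number N can be written as N = a + b with a, b ∈ 𝒞. -/
/-- The Cantor numbers: natural numbers whose base-3 expansion uses only the
digits 0 and 2. -/
def CantorNumbers : Set ℕ :=
  {n : ℕ | ∀ d ∈ Nat.digits 3 n, d = 0 ∨ d = 2}

/-!
Twice a ternary digit is `0 = 0 + 0`, `2 = 0 + 2` or `4 = 2 + 2`, so the ternary digits of `N / 2`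
can be doubled one at a time, distributing each double over two summands without any carrying.
-/

/-- The set of natural numbers whose base-`b` digits all lie in `D`, generalizing the Cantor
numbers to arbitrary bases and digit sets. Zero always belongs to it, since `Nat.digits b 0` is
empty. -/
def restrictedDigits (b : ℕ) (D : Set ℕ) : Set ℕ :=
  {n : ℕ | ∀ d ∈ Nat.digits b n, d ∈ D}

section RestrictedDigits

variable {b : ℕ} {D E : Set ℕ}

theorem zero_mem_restrictedDigits : 0 ∈ restrictedDigits b D := by
  simp [restrictedDigits]

theorem add_base_mul_mem_restrictedDigits {d n : ℕ} (hb : 1 < b) (hdb : d < b) (hd : d ∈ D)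
    (hn : n ∈ restrictedDigits b D) : d + b * n ∈ restrictedDigits b D := by
  by_cases h0 : d ≠ 0 ∨ n ≠ 0
  · rw [restrictedDigits, Set.mem_ofPred_eq, Nat.digits_add b hb d n hdb h0, List.forall_mem_cons]
    exact ⟨hd, hn⟩
  · obtain ⟨rfl, rfl⟩ : d = 0 ∧ n = 0 := by simpa using h0
    exact zero_mem_restrictedDigits

theorem exists_mem_restrictedDigits_mul_eq_add {m : ℕ} (hb : 1 < b) (hD : ∀ d ∈ D, d < b)
    (hE : ∀ e ∈ E, e < b) (hdigit : ∀ r < b, ∃ d ∈ D, ∃ e ∈ E, m * r = d + e) (n : ℕ) :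
    ∃ x ∈ restrictedDigits b D, ∃ y ∈ restrictedDigits b E, m * n = x + y := by
  induction n using Nat.strong_induction_on with
  | _ n ih =>
    obtain rfl | hn := eq_or_ne n 0
    · exact ⟨0, zero_mem_restrictedDigits, 0, zero_mem_restrictedDigits, rfl⟩
    obtain ⟨x, hx, y, hy, hquot⟩ := ih (n / b) (Nat.div_lt_self (Nat.pos_of_ne_zero hn) hb)
    obtain ⟨d, hd, e, he, hrem⟩ := hdigit (n % b) (Nat.mod_lt n (by lia))
    refine ⟨d + b * x, add_base_mul_mem_restrictedDigits hb (hD d hd) hd hx,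
      e + b * y, add_base_mul_mem_restrictedDigits hb (hE e he) he hy, ?_⟩
    calc
      m * n = m * (n % b + b * (n / b)) := by rw [Nat.mod_add_div]
      _ = m * (n % b) + b * (m * (n / b)) := by ring
      _ = (d + e) + b * (x + y) := by rw [hrem, hquot]
      _ = (d + b * x) + (e + b * y) := by ring

end RestrictedDigits

theorem cantorNumbers_eq_restrictedDigits : CantorNumbers = restrictedDigits 3 {0, 2} :=
  rfl

theorem exists_mem_pair_mul_eq_add (m : ℕ) {r : ℕ} (hr : r < 3) :
    ∃ d ∈ ({0, m} : Set ℕ), ∃ e ∈ ({0, m} : Set ℕ), m * r = d + e := by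
  interval_cases r
  · exact ⟨0, by simp, 0, by simp, by ring⟩
  · exact ⟨0, by simp, m, by simp, by ring⟩
  · exact ⟨m, by simp, m, by simp, by ring⟩

/-- Every even natural number is the sum of two Cantor numbers. -/
theorem even_eq_sum_two_cantor (N : ℕ) (hN : Even N) :
    ∃ a ∈ CantorNumbers, ∃ b ∈ CantorNumbers, N = a + b := by
  obtain ⟨n, rfl⟩ := hN.exists_two_nsmul
  rw [cantorNumbers_eq_restrictedDigits, smul_eq_mul]
  have digit_lt : ∀ d ∈ ({0, 2} : Set ℕ), d < 3 := by simp
  exact exists_mem_restrictedDigits_mul_eq_add (by norm_num) digit_lt digit_lt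
    (fun _ => exists_mem_pair_mul_eq_add 2) n
end

section
/- Let ℰ be the set of natural numbers (including 0) whose binary digit sum is even. Then a natural number N can be written as N = a + b + c with a, b, c ∈ ℰ if and only if N ∉ {1, 2, 4, 7}. -/
/-- The evil numbers: natural numbers whose binary digit sum is even. -/
def EvilNumbers : Set ℕ :=
  {n : ℕ | Even (Nat.digits 2 n).sum}

/-!
Exactly one of `2 * m` and `2 * m + 1` is evil. As `5` and `6` are evil, an even `n ≥ 6` is thus a
sum of two evil numbers: `(n - 6) + 6` if `n - 6` is evil, and `(n - 5) + 5` otherwise. Adding `0`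
or `3` to such a sum reaches every even `N ≥ 6` and every odd `N ≥ 9`.
-/

lemma sum_digits_add_of_dvd {b n d : ℕ} (hn : b ∣ n) (hd : d < b) :
    (b.digits (n + d)).sum = (b.digits n).sum + d := by
  obtain ⟨m, rfl⟩ := hn
  obtain rfl | hd0 := d.eq_zero_or_pos
  · rfl
  have hb : 1 < b := by omega
  have sum_digits_mul : (b.digits (b * m)).sum = (b.digits m).sum := by
    obtain rfl | hm := m.eq_zero_or_pos
    · simp
    · simp [Nat.digits_base_mul hb hm]
  rw [add_comm (b * m), Nat.digits_add b hb d m hd (.inl hd0.ne'), List.sum_cons,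
    sum_digits_mul, add_comm]

lemma add_one_mem_evilNumbers_iff {n : ℕ} (hn : Even n) :
    n + 1 ∈ EvilNumbers ↔ n ∉ EvilNumbers := by
  simp only [EvilNumbers, Set.mem_ofPred_eq, sum_digits_add_of_dvd hn.two_dvd one_lt_two,
    Nat.even_add_one]

lemma zero_mem_evilNumbers : 0 ∈ EvilNumbers := by
  simp [EvilNumbers]

lemma mem_evilNumbers_iff_of_lt_eight {n : ℕ} (hn : n < 8) :
    n ∈ EvilNumbers ↔ n = 0 ∨ n = 3 ∨ n = 5 ∨ n = 6 := by
  interval_cases n <;> simp +decide [EvilNumbers]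

lemma eq_or_eight_le_of_mem_evilNumbers {n : ℕ} (hn : n ∈ EvilNumbers) :
    n = 0 ∨ n = 3 ∨ n = 5 ∨ n = 6 ∨ 8 ≤ n := by
  obtain h8 | h8 := lt_or_ge n 8
  · have := (mem_evilNumbers_iff_of_lt_eight h8).1 hn
    omega
  · omega

lemma exists_mem_evilNumbers_eq_add_of_even {n : ℕ} (hn : Even n) (h2 : n ≠ 2) (h4 : n ≠ 4) :
    ∃ a ∈ EvilNumbers, ∃ b ∈ EvilNumbers, n = a + b := by
  obtain rfl | h6 : n = 0 ∨ 6 ≤ n := by grind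
  · exact ⟨0, zero_mem_evilNumbers, 0, zero_mem_evilNumbers, rfl⟩
  obtain ⟨k, rfl⟩ := Nat.exists_eq_add_of_le' h6
  have hk : Even k := by grind
  by_cases hk_mem : k ∈ EvilNumbers
  · exact ⟨k, hk_mem, 6, by simp [mem_evilNumbers_iff_of_lt_eight], rfl⟩
  · exact ⟨k + 1, (add_one_mem_evilNumbers_iff hk).2 hk_mem, 5,
      by simp [mem_evilNumbers_iff_of_lt_eight], rfl⟩

/-- A natural number is the sum of three evil numbers if and only if it is not in
`{1, 2, 4, 7}`. -/
theorem sum_three_evil_iff (N : ℕ) :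
    (∃ a ∈ EvilNumbers, ∃ b ∈ EvilNumbers, ∃ c ∈ EvilNumbers, N = a + b + c) ↔
      (N ≠ 1 ∧ N ≠ 2 ∧ N ≠ 4 ∧ N ≠ 7) := by
  constructor
  · rintro ⟨a, ha, b, hb, c, hc, rfl⟩
    have ha' := eq_or_eight_le_of_mem_evilNumbers ha
    have hb' := eq_or_eight_le_of_mem_evilNumbers hb
    have hc' := eq_or_eight_le_of_mem_evilNumbers hc
    omega
  · rintro ⟨h1, h2, h4, h7⟩
    have three_mem : 3 ∈ EvilNumbers := by simp [mem_evilNumbers_iff_of_lt_eight]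
    have five_mem : 5 ∈ EvilNumbers := by simp [mem_evilNumbers_iff_of_lt_eight]
    rcases N.even_or_odd with hN | hN
    · obtain ⟨b, hb, c, hc, rfl⟩ := exists_mem_evilNumbers_eq_add_of_even hN h2 h4
      exact ⟨0, zero_mem_evilNumbers, b, hb, c, hc, by omega⟩
    · obtain rfl | h5 := eq_or_ne N 5
      · exact ⟨5, five_mem, 0, zero_mem_evilNumbers, 0, zero_mem_evilNumbers, rfl⟩
      have hN3 : Even (N - 3) := by grind
      obtain ⟨b, hb, c, hc, h⟩ := exists_mem_evilNumbers_eq_add_of_even hN3 (by omega) (by omega)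
      exact ⟨3, three_mem, b, hb, c, hc, by grind⟩
end

section
/- Let ℛ be the set of natural numbers n such that the number of indices i ≥ 0 for which both bit i and bit i+1 of the binary expansion of n equal 1 is odd (i.e., the Golay–Rudin–Shapiro function r(n) equals −1). Then a natural number N can be written as N = a + b with a, b ∈ ℛ if and only if N ∉ {0, 1, 2, 3, 4, 5, 7, 8, 10, 11, 13, 20}. -/
/-- `e(n)`: the number of indices `i ≥ 0` such that bits `i` and `i+1` of the binary
expansion of `n` are both `1` (occurrences of the block `11`). -/
def elevenCount (n : ℕ) : ℕ :=
  ((Finset.range n).filter (fun i => n.testBit i ∧ n.testBit (i + 1))).card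

/-- The Golay–Rudin–Shapiro set: natural numbers `n` with `r(n) = -1`, i.e. with an
odd number of occurrences of the block `11` in the binary expansion. -/
def RudinShapiroSet : Set ℕ :=
  {n : ℕ | Odd (elevenCount n)}

/-!
The function `r(n) = (-1) ^ e(n)` satisfies `r(2n) = r(n)` and `r(2n + 1) = (-1) ^ n r(n)`. Look at
decompositions `M = 2a + b`. They give `2M = 2(2a) + 2b` and `2M + 1 = 2(2a) + (2b + 1)`; the first
keeps the signs `r(a)` and `r(b)`, and the second multiplies `r(b)` by `(-1) ^ b = (-1) ^ M`, which
depends only on `M`. Hence if all four pairs of signs occur for `M`, they all occur for `2M` and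
`2M + 1`. They do occur for `41 ≤ N < 82`, so they occur for every `N ≥ 41`; as `r(2a) = r(a)`, such
an `N = 2a + b` is a sum of two elements of `ℛ`. The remaining `N` are checked directly.
-/

theorem elevenCount_eq_count {n m : ℕ} (h : n ≤ m) :
    elevenCount n = Nat.count (fun i ↦ n.testBit i ∧ n.testBit (i + 1)) m := by
  obtain ⟨k, rfl⟩ := Nat.exists_eq_add_of_le h
  have no_bits_above (i : ℕ) : n.testBit (n + i) = false :=
    Nat.testBit_eq_false_of_lt (Nat.lt_two_pow_self.trans_le (by gcongr <;> omega))
  rw [Nat.count_add, Nat.count_eq_card_filter_range]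
  simp [elevenCount, no_bits_above]

theorem elevenCount_bit (b : Bool) (n : ℕ) :
    elevenCount (Nat.bit b n) = elevenCount n + b.toNat * (n % 2) := by
  have bit_le : Nat.bit b n ≤ 2 * n + 1 := by cases b <;> simp
  rw [elevenCount_eq_count bit_le, Nat.count_succ', elevenCount_eq_count (by omega : n ≤ 2 * n)]
  simp only [Nat.testBit_bit_succ, Nat.testBit_zero]
  cases b <;> cases Nat.mod_two_eq_zero_or_one n <;> simp [*]

/-- The Golay–Rudin–Shapiro function `r`, valued in `ℤˣ = {1, -1}` so that statements about all
signs range over a finite type. -/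
def rudinShapiro (n : ℕ) : ℤˣ :=
  (-1) ^ elevenCount n

theorem mem_rudinShapiroSet_iff {n : ℕ} : n ∈ RudinShapiroSet ↔ rudinShapiro n = -1 :=
  (neg_one_pow_eq_neg_one_iff_odd (by decide)).symm

theorem rudinShapiro_two_mul (n : ℕ) : rudinShapiro (2 * n) = rudinShapiro n := by
  simpa [rudinShapiro] using congrArg ((-1 : ℤˣ) ^ ·) (elevenCount_bit false n)

theorem rudinShapiro_two_mul_add_one (n : ℕ) :
    rudinShapiro (2 * n + 1) = (-1) ^ n * rudinShapiro n := by
  have count_eq : elevenCount (2 * n + 1) = elevenCount n + n % 2 := by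
    simpa using elevenCount_bit true n
  rw [rudinShapiro, count_eq, pow_add, rudinShapiro, mul_comm, ← Int.units_pow_eq_pow_mod_two]

/-- Every pair of signs is `(r(a), r(b))` for some decomposition `N = 2a + b`. Writing the even
summand as `2a` fixes the parity of `b` to be that of `N`, which is what passing from `N` to
`2N + 1` requires. -/
def SplitsWithAllSigns (N : ℕ) : Prop :=
  ∀ s t : ℤˣ, ∃ a b, 2 * a + b = N ∧ rudinShapiro a = s ∧ rudinShapiro b = t

namespace SplitsWithAllSigns

theorem two_mul {M : ℕ} (hM : SplitsWithAllSigns M) : SplitsWithAllSigns (2 * M) := by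
  intro s t
  obtain ⟨a, b, rfl, rfl, rfl⟩ := hM s t
  exact ⟨2 * a, 2 * b, by ring, rudinShapiro_two_mul a, rudinShapiro_two_mul b⟩

theorem two_mul_add_one {M : ℕ} (hM : SplitsWithAllSigns M) :
    SplitsWithAllSigns (2 * M + 1) := by
  intro s t
  obtain ⟨a, b, hab, rfl, hb⟩ := hM s ((-1) ^ M * t)
  have sign_eq : (-1 : ℤˣ) ^ M = (-1) ^ b := by simp [← hab, pow_add, pow_mul]
  refine ⟨2 * a, 2 * b + 1, by omega, rudinShapiro_two_mul a, ?_⟩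
  rw [rudinShapiro_two_mul_add_one, hb, sign_eq, ← mul_assoc, Int.units_mul_self, one_mul]

theorem of_lt_eighty_two {N : ℕ} (h₁ : 41 ≤ N) (h₂ : N < 82) : SplitsWithAllSigns N := by
  have signs_occur : ∀ N ∈ Finset.Ico 41 82, ∀ s t : ℤˣ,
      ∃ a ≤ N / 2, rudinShapiro a = s ∧ rudinShapiro (N - 2 * a) = t := by
    decide +kernel
  intro s t
  obtain ⟨a, ha, hs, ht⟩ := signs_occur N (Finset.mem_Ico.2 ⟨h₁, h₂⟩) s t
  exact ⟨a, N - 2 * a, by omega, hs, ht⟩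

theorem of_forty_one_le {N : ℕ} (hN : 41 ≤ N) : SplitsWithAllSigns N := by
  induction N using Nat.strong_induction_on with
  | _ N ih =>
    by_cases hlt : N < 82
    · exact of_lt_eighty_two hN hlt
    · obtain ⟨M, rfl | rfl⟩ := Nat.even_or_odd' N
      · exact (ih M (by omega) (by omega)).two_mul
      · exact (ih M (by omega) (by omega)).two_mul_add_one

theorem exists_mem_add_mem {N : ℕ} (hN : SplitsWithAllSigns N) :
    ∃ a ∈ RudinShapiroSet, ∃ b ∈ RudinShapiroSet, N = a + b := by
  obtain ⟨a, b, rfl, ha, hb⟩ := hN (-1) (-1)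
  rw [← rudinShapiro_two_mul] at ha
  exact ⟨2 * a, mem_rudinShapiroSet_iff.2 ha, b, mem_rudinShapiroSet_iff.2 hb, rfl⟩

end SplitsWithAllSigns

theorem exists_mem_add_mem_iff_of_lt {N : ℕ} (hN : N < 41) :
    (∃ a ∈ RudinShapiroSet, ∃ b ∈ RudinShapiroSet, N = a + b) ↔
      N ∉ ({0, 1, 2, 3, 4, 5, 7, 8, 10, 11, 13, 20} : Finset ℕ) := by
  have check : ∀ N < 41, (∃ a ≤ N, rudinShapiro a = -1 ∧ rudinShapiro (N - a) = -1) ↔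
      N ∉ ({0, 1, 2, 3, 4, 5, 7, 8, 10, 11, 13, 20} : Finset ℕ) := by
    decide +kernel
  rw [← check N hN]
  simp only [mem_rudinShapiroSet_iff]
  constructor
  · rintro ⟨a, ha, b, hb, rfl⟩
    exact ⟨a, by omega, ha, by rwa [Nat.add_sub_cancel_left]⟩
  · rintro ⟨a, hle, ha, hb⟩
    exact ⟨a, ha, N - a, hb, by omega⟩

/-- A natural number is the sum of two elements of `ℛ` if and only if it is not in
`{0, 1, 2, 3, 4, 5, 7, 8, 10, 11, 13, 20}`. -/
theorem sum_two_rudinShapiro_iff (N : ℕ) :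
    (∃ a ∈ RudinShapiroSet, ∃ b ∈ RudinShapiroSet, N = a + b) ↔
      N ∉ ({0, 1, 2, 3, 4, 5, 7, 8, 10, 11, 13, 20} : Set ℕ) := by
  by_cases hN : N < 41
  · simpa using exists_mem_add_mem_iff_of_lt hN
  · have not_exception : N ∉ ({0, 1, 2, 3, 4, 5, 7, 8, 10, 11, 13, 20} : Set ℕ) := by
      simp only [Set.mem_insert_iff, Set.mem_singleton_iff]
      omega
    have splits := SplitsWithAllSigns.of_forty_one_le (not_lt.1 hN)
    exact iff_of_true splits.exists_mem_add_mem not_exception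
end

section
/- Let 𝒟 be the set of natural numbers (including 0) whose base-4 expansions consist only of the digits 0 and 1. Then every natural number N is uniquely representable as N = d_1 + 2·d_2 with d_1, d_2 ∈ 𝒟; that is, for each N ∈ ℕ there exists exactly one pair (d_1, d_2) ∈ 𝒟 × 𝒟 with N = d_1 + 2·d_2. -/
/-- The set of natural numbers whose base-4 expansion uses only the digits 0 and 1. -/
def BaseFourZeroOne : Set ℕ :=
  {n : ℕ | ∀ d ∈ Nat.digits 4 n, d = 0 ∨ d = 1}

/-!
Reading `N = d + m * e` modulo `m * k`, when the last base-`m * k` digits of `d` and `e` are below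
`m` and `k`, involves no carry: these digits are forced to be `N % m` and `N / m % k`, and what
remains is the same equation for the quotients by `m * k`. Induction on `N` then yields existence
and uniqueness at once; the theorem is the case `m = k = 2`.
-/

/-- The natural numbers all of whose base-`b` digits are less than `m`. Since `Nat.digits b 0` is
the empty list, `0` belongs to this set for every `m`, including `m = 0`. -/
def digitsBelow (b m : ℕ) : Set ℕ :=
  {n : ℕ | ∀ d ∈ Nat.digits b n, d < m}

theorem baseFourZeroOne_eq_digitsBelow : BaseFourZeroOne = digitsBelow 4 2 := by
  simp only [BaseFourZeroOne, digitsBelow, Nat.lt_succ_iff, Nat.le_one_iff_eq_zero_or_eq_one]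

theorem zero_mem_digitsBelow (b m : ℕ) : 0 ∈ digitsBelow b m := by
  simp [digitsBelow]

theorem mem_digitsBelow_iff_mod_div {b m n : ℕ} (hb : 1 < b) (hm : 0 < m) :
    n ∈ digitsBelow b m ↔ n % b < m ∧ n / b ∈ digitsBelow b m := by
  rcases eq_or_ne n 0 with rfl | hn
  · simp [zero_mem_digitsBelow, hm]
  · simp [digitsBelow, Nat.digits_eq_cons_digits_div hb hn]

section

variable {m k N d e : ℕ}

theorem div_mod_add_mul (hd : d % (m * k) < m) (he : e % (m * k) < k) :
    (d + m * e) / (m * k) = d / (m * k) + m * (e / (m * k)) ∧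
      (d + m * e) % (m * k) = d % (m * k) + m * (e % (m * k)) := by
  have no_carry : d % (m * k) + m * (e % (m * k)) < m * k :=
    calc d % (m * k) + m * (e % (m * k)) < m + m * (e % (m * k)) := by gcongr
      _ = m * (e % (m * k) + 1) := by ring
      _ ≤ m * k := Nat.mul_le_mul_left m he
  refine (Nat.div_mod_unique (Nat.zero_lt_of_lt no_carry)).2 ⟨?_, no_carry⟩
  linear_combination Nat.mod_add_div d (m * k) + m * Nat.mod_add_div e (m * k)

theorem eq_add_mul_iff_mod_div (hd : d % (m * k) < m) (he : e % (m * k) < k) :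
    N = d + m * e ↔ d % (m * k) = N % m ∧ e % (m * k) = N / m % k ∧
      N / (m * k) = d / (m * k) + m * (e / (m * k)) := by
  obtain ⟨hdiv, hmod⟩ := div_mod_add_mul hd he
  constructor
  · rintro rfl
    have digits_eq : (d + m * e) / m % k = e % (m * k) ∧ (d + m * e) % m = d % (m * k) := by
      rw [← Nat.mod_mul_right_div_self, ← Nat.mod_mul_right_mod _ m k, hmod]
      exact (Nat.div_mod_unique (Nat.zero_lt_of_lt hd)).2 ⟨rfl, hd⟩
    exact ⟨digits_eq.2.symm, digits_eq.1.symm, hdiv⟩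
  · rintro ⟨hd', he', hN⟩
    rw [← Nat.mod_add_div N (m * k), ← Nat.mod_add_div (d + m * e) (m * k), hdiv, hmod, hN,
      Nat.mod_mul, hd', he']

theorem mem_digitsBelow_and_eq_add_mul_iff (hmk : 1 < m * k) :
    (d ∈ digitsBelow (m * k) m ∧ e ∈ digitsBelow (m * k) k ∧ N = d + m * e) ↔
      d % (m * k) = N % m ∧ e % (m * k) = N / m % k ∧
        d / (m * k) ∈ digitsBelow (m * k) m ∧ e / (m * k) ∈ digitsBelow (m * k) k ∧
          N / (m * k) = d / (m * k) + m * (e / (m * k)) := by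
  have hm : 0 < m := Nat.pos_of_mul_pos_right (Nat.zero_lt_of_lt hmk)
  have hk : 0 < k := Nat.pos_of_mul_pos_left (Nat.zero_lt_of_lt hmk)
  rw [mem_digitsBelow_iff_mod_div hmk hm, mem_digitsBelow_iff_mod_div hmk hk]
  constructor
  · rintro ⟨⟨hd, hd'⟩, ⟨he, he'⟩, hN⟩
    obtain ⟨hdN, heN, hdiv⟩ := (eq_add_mul_iff_mod_div hd he).1 hN
    exact ⟨hdN, heN, hd', he', hdiv⟩
  · rintro ⟨hdN, heN, hd', he', hdiv⟩
    have hd : d % (m * k) < m := hdN ▸ Nat.mod_lt N hm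
    have he : e % (m * k) < k := heN ▸ Nat.mod_lt (N / m) hk
    exact ⟨⟨hd, hd'⟩, ⟨he, he'⟩, (eq_add_mul_iff_mod_div hd he).2 ⟨hdN, heN, hdiv⟩⟩

end

theorem unique_sum_baseFourZeroOne_general {m k : ℕ} (hmk : 1 < m * k) (N : ℕ) :
    ∃! p : ℕ × ℕ, p.1 ∈ digitsBelow (m * k) m ∧ p.2 ∈ digitsBelow (m * k) k ∧
      N = p.1 + m * p.2 := by
  have hm : 0 < m := Nat.pos_of_mul_pos_right (Nat.zero_lt_of_lt hmk)
  have hk : 0 < k := Nat.pos_of_mul_pos_left (Nat.zero_lt_of_lt hmk)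
  induction N using Nat.strong_induction_on with
  | _ N ih =>
    rcases N.eq_zero_or_pos with rfl | hN
    · refine ⟨(0, 0), ⟨zero_mem_digitsBelow _ _, zero_mem_digitsBelow _ _, rfl⟩, ?_⟩
      rintro ⟨d, e⟩ ⟨-, -, h⟩
      simpa [hm.ne', eq_comm] using h
    · obtain ⟨⟨x, y⟩, hxy, unique_xy⟩ := ih (N / (m * k)) (Nat.div_lt_self hN hmk)
      have hr : N % m < m * k := (Nat.mod_lt N hm).trans_le (Nat.le_mul_of_pos_right m hk)
      have hs : N / m % k < m * k := (Nat.mod_lt _ hk).trans_le (Nat.le_mul_of_pos_left k hm)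
      refine ⟨(N % m + m * k * x, N / m % k + m * k * y), ?_, ?_⟩
      · refine (mem_digitsBelow_and_eq_add_mul_iff hmk).2 ?_
        simpa [Nat.add_mul_div_left, Nat.zero_lt_of_lt hmk, Nat.mod_eq_of_lt, Nat.div_eq_of_lt,
          hr, hs] using hxy
      · rintro ⟨d, e⟩ hde
        obtain ⟨hd, he, hquot⟩ := (mem_digitsBelow_and_eq_add_mul_iff hmk).1 hde
        obtain ⟨rfl, rfl⟩ := Prod.mk.inj (unique_xy (d / (m * k), e / (m * k)) hquot)
        rw [← hd, ← he, Nat.mod_add_div, Nat.mod_add_div]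

/-- Every natural number `N` is uniquely representable as `N = d₁ + 2·d₂` with
`d₁, d₂ ∈ 𝒟`, where `𝒟` is the set of naturals whose base-4 digits are all 0 or 1. -/
theorem unique_sum_baseFourZeroOne (N : ℕ) :
    ∃! p : ℕ × ℕ, p.1 ∈ BaseFourZeroOne ∧ p.2 ∈ BaseFourZeroOne ∧ N = p.1 + 2 * p.2 := by
  rw [baseFourZeroOne_eq_digitsBelow]
  exact unique_sum_baseFourZeroOne_general (m := 2) (k := 2) (by norm_num) N
end
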